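/- arXiv:2307.09606 — 2 statements merged into one kernel-verified Lean document; each statement's English description precedes it below -/
import Mathlib

section
/- Let E be a finite set and let f : E → {a,b,c,d} be a uniformly random coloring. For any closed upward families 𝒰, 𝒱, 𝒲 of subsets of E, writing 𝒰_{ab} for the event {E_{ab}(f) ∈ 𝒰}, 𝒱_{ac} for {E_{ac}(f) ∈ 𝒱}, and 𝒲_{ad} for {E_{ad}(f) ∈ 𝒲}, one has P(𝒰_{ab} ∩ 𝒱_{ac} ∩ 𝒲_{ad}) ≥ P(𝒰_{ab}) · P(𝒱_{ac}) · P(𝒲_{ad}). -/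
open Finset

/-- `Est f s t` is the set of elements colored `s` or `t` by the coloring `f`.
Colors: `a = 0`, `b = 1`, `c = 2`, `d = 3`. -/
def Est {E : Type*} [Fintype E] [DecidableEq E] (f : E → Fin 4) (s t : Fin 4) : Finset E :=
  Finset.univ.filter (fun e => f e = s ∨ f e = t)

/-!
A uniformly random coloring amounts to two independent uniformly random subsets `A = E_{ab}` and
`B = E_{ac}`, and `E_{ad}` is the set `A ⇔ B` of elements on which `A` and `B` agree. The inequality
`𝔼 u(A) · 𝔼 v(B) · 𝔼 w(A ⇔ B) ≤ 𝔼 u(A) v(B) w(A ⇔ B)` holds for all monotone functions `u`, `v`,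
`w`, by induction on the number of elements: for a single element the difference of the two sides is
a positive multiple of the product of the increments of `u`, `v` and `w`, and averaging a monotone
function over one element leaves a monotone function of the others.
-/

open scoped BigOperators symmDiff

section SymmDiff

variable {α : Type*} [DecidableEq α] {a : α} {A B : Finset α}

theorem insert_symmDiff_of_notMem (hB : a ∉ B) : insert a A ∆ B = insert a (A ∆ B) := by
  grind [mem_symmDiff]

theorem symmDiff_insert_of_notMem (hA : a ∉ A) : A ∆ insert a B = insert a (A ∆ B) := by
  rw [symmDiff_comm, insert_symmDiff_of_notMem hA, symmDiff_comm]

theorem insert_symmDiff_insert (hA : a ∉ A) (hB : a ∉ B) : insert a A ∆ insert a B = A ∆ B := by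
  grind [mem_symmDiff]

end SymmDiff

section PowersetInequality

variable {α : Type*} [DecidableEq α]

theorem monotone_add_insert {M : Type*} [Add M] [Preorder M] [AddLeftMono M] [AddRightMono M]
    {u : Finset α → M} (hu : Monotone u) (a : α) : Monotone fun A => u A + u (insert a A) :=
  fun _ _ h => add_le_add (hu h) (hu (insert_subset_insert a h))

variable {R : Type*} [CommRing R] [PartialOrder R] [IsOrderedRing R]

theorem add_mul_add_mul_add_le {u₀ u₁ v₀ v₁ w₀ w₁ : R} (hu : u₀ ≤ u₁) (hv : v₀ ≤ v₁)
    (hw : w₀ ≤ w₁) :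
    (u₀ + u₁) * (v₀ + v₁) * (w₀ + w₁) ≤
      2 * (u₀ * v₀ * w₁ + u₀ * v₁ * w₀ + (u₁ * v₀ * w₀ + u₁ * v₁ * w₁)) := by
  have increments_nonneg : 0 ≤ (u₁ - u₀) * (v₁ - v₀) * (w₁ - w₀) :=
    mul_nonneg (mul_nonneg (sub_nonneg.2 hu) (sub_nonneg.2 hv)) (sub_nonneg.2 hw)
  rw [← sub_nonneg]
  convert increments_nonneg using 1
  ring

theorem sum_powerset_mul_sum_mul_sum_le (S : Finset α) {u v w : Finset α → R}
    (hu : Monotone u) (hv : Monotone v) (hw : Monotone w) :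
    (∑ A ∈ S.powerset, u A) * (∑ A ∈ S.powerset, v A) * (∑ A ∈ S.powerset, w A) ≤
      2 ^ #S * ∑ A ∈ S.powerset, ∑ B ∈ S.powerset, u A * v B * w (S \ (A ∆ B)) := by
  induction S using Finset.induction_on generalizing u v w with
  | empty => simp
  | insert a S ha ih =>
    simp only [sum_powerset_insert ha, ← sum_add_distrib]
    refine (ih (monotone_add_insert hu a) (monotone_add_insert hv a)
      (monotone_add_insert hw a)).trans ?_
    rw [card_insert_of_notMem ha, pow_succ, mul_assoc]
    refine mul_le_mul_of_nonneg_left ?_ (pow_nonneg zero_le_two #S)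
    simp only [mul_sum]
    refine sum_le_sum fun A hA => sum_le_sum fun B hB => ?_
    have haA : a ∉ A := notMem_of_mem_powerset_of_notMem hA ha
    have haB : a ∉ B := notMem_of_mem_powerset_of_notMem hB ha
    have haAB : a ∉ A ∆ B := by simp [mem_symmDiff, haA, haB]
    rw [insert_symmDiff_insert haA haB, insert_symmDiff_of_notMem haB,
      symmDiff_insert_of_notMem haA, insert_sdiff_insert, sdiff_insert_of_notMem ha,
      insert_sdiff_of_notMem S haAB]
    exact add_mul_add_mul_add_le (hu (subset_insert a A)) (hv (subset_insert a B))
      (hw (subset_insert a (S \ (A ∆ B))))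

end PowersetInequality

section Indicator

theorem monotone_ite_mem_of_isUpperSet {α K : Type*} [Preorder α] [DecidableEq α] [Zero K] [One K]
    [Preorder K] [ZeroLEOneClass K] {𝒜 : Finset α} (h𝒜 : IsUpperSet (𝒜 : Set α)) :
    Monotone fun A => if A ∈ 𝒜 then (1 : K) else 0 := by
  intro A B hAB
  by_cases hA : A ∈ 𝒜
  · have hB : B ∈ 𝒜 := h𝒜 hAB hA
    simp [hA, hB]
  · simp only [hA, if_false]
    split_ifs <;> simp

theorem card_filter_div_card {Ω K : Type*} [Fintype Ω] [Semifield K] [CharZero K]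
    (p : Ω → Prop) [DecidablePred p] :
    (#{x | p x} : K) / Fintype.card Ω = 𝔼 x, if p x then 1 else 0 := by
  rw [Fintype.expect_eq_sum_div_card, sum_boole]

end Indicator

section Coloring

variable {E : Type*} [Fintype E] [DecidableEq E]

theorem mem_Est {f : E → Fin 4} {s t : Fin 4} {e : E} : e ∈ Est f s t ↔ f e = s ∨ f e = t := by
  simp [Est]

theorem Est_zero_three (f : E → Fin 4) : Est f 0 3 = Est f 0 1 ⇔ Est f 0 2 := by
  ext e
  rw [← compl_symmDiff, mem_compl, mem_symmDiff]
  simp only [mem_Est]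
  generalize f e = i
  decide +revert

theorem Est_perm_comp (σ : Equiv.Perm (Fin 4)) (f : E → Fin 4) (s t : Fin 4) :
    Est (σ ∘ f) (σ s) (σ t) = Est f s t := by
  ext e
  simp [mem_Est]

/-- The bijection between colorings and pairs of subsets sending `f` to `(E_{ab}(f), E_{ac}(f))`.
It encodes the independence and uniformity of these two random sets. -/
def coloringEquiv : (E → Fin 4) ≃ Finset E × Finset E where
  toFun f := (Est f 0 1, Est f 0 2)
  invFun p e := if e ∈ p.1 then (if e ∈ p.2 then 0 else 1) else (if e ∈ p.2 then 2 else 3)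
  left_inv f := by
    funext e
    simp only [mem_Est]
    generalize f e = i
    decide +revert
  right_inv p := by
    ext e <;> simp only [mem_Est] <;> split_ifs <;> simp_all

section Expect

variable {M : Type*} [AddCommMonoid M] [Module ℚ≥0 M]

theorem expect_Est_zero_one_zero_two (g : Finset E → Finset E → M) :
    𝔼 f : E → Fin 4, g (Est f 0 1) (Est f 0 2) = 𝔼 A, 𝔼 B, g A B := by
  rw [← expect_product', univ_product_univ]
  exact Fintype.expect_equiv coloringEquiv _ _ fun _ => rfl

theorem expect_Est {s t : Fin 4} (hst : s ≠ t) (g : Finset E → M) :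
    𝔼 f : E → Fin 4, g (Est f s t) = 𝔼 A, g A := by
  obtain ⟨σ, hs, ht⟩ : ∃ σ : Equiv.Perm (Fin 4), σ s = 0 ∧ σ t = 1 :=
    MulAction.is_two_pretransitive_iff.1 (Equiv.Perm.isMultiplyPretransitive (Fin 4) 2) hst
      zero_ne_one
  calc 𝔼 f : E → Fin 4, g (Est f s t)
    _ = 𝔼 f : E → Fin 4, g (Est f 0 1) :=
      Fintype.expect_equiv ((Equiv.refl E).arrowCongr σ) _ _ fun f => by
        rw [← Est_perm_comp σ, hs, ht]
        rfl
    _ = 𝔼 A, g A := by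
      rw [expect_Est_zero_one_zero_two fun A _ => g A]
      simp

end Expect

theorem colored_percolation_upward_pos_dep_general {K : Type*} [Field K] [LinearOrder K]
    [IsStrictOrderedRing K] {u v w : Finset E → K} (hu : Monotone u) (hv : Monotone v)
    (hw : Monotone w) :
    (𝔼 f : E → Fin 4, u (Est f 0 1)) * (𝔼 f : E → Fin 4, v (Est f 0 2)) *
        (𝔼 f : E → Fin 4, w (Est f 0 3)) ≤
      𝔼 f : E → Fin 4, u (Est f 0 1) * v (Est f 0 2) * w (Est f 0 3) := by
  rw [expect_Est (by decide), expect_Est (by decide), expect_Est (by decide)]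
  simp only [Est_zero_three]
  rw [expect_Est_zero_one_zero_two fun A B => u A * v B * w (A ⇔ B)]
  have sum_le := sum_powerset_mul_sum_mul_sum_le univ hu hv hw
  simp only [powerset_univ, ← compl_eq_univ_sdiff, compl_symmDiff, card_univ] at sum_le
  simp only [Fintype.expect_eq_sum_div_card, Fintype.card_finset, Nat.cast_pow, Nat.cast_ofNat,
    ← sum_div]
  set N : K := 2 ^ Fintype.card E
  have N_pos : 0 < N := by positivity
  calc (∑ A, u A) / N * ((∑ A, v A) / N) * ((∑ A, w A) / N)
    _ = (∑ A, u A) * (∑ A, v A) * (∑ A, w A) / N ^ 3 := by ring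
    _ ≤ N * (∑ A, ∑ B, u A * v B * w (A ⇔ B)) / N ^ 3 := by gcongr
    _ = (∑ A, ∑ B, u A * v B * w (A ⇔ B)) / N / N := by field_simp

end Coloring

/-- For a uniformly random 4-coloring of a finite set `E` and closed upward families
`𝒰, 𝒱, 𝒲`, the events `E_{ab}(f) ∈ 𝒰`, `E_{ac}(f) ∈ 𝒱`, `E_{ad}(f) ∈ 𝒲` are
positively dependent:
`P(𝒰_{ab} ∩ 𝒱_{ac} ∩ 𝒲_{ad}) ≥ P(𝒰_{ab}) · P(𝒱_{ac}) · P(𝒲_{ad})`. -/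
theorem colored_percolation_upward_pos_dep (E : Type*) [Fintype E] [DecidableEq E]
    (𝒰 𝒱 𝒲 : Finset (Finset E))
    (hU : ∀ A ∈ 𝒰, ∀ B : Finset E, A ⊆ B → B ∈ 𝒰)
    (hV : ∀ A ∈ 𝒱, ∀ B : Finset E, A ⊆ B → B ∈ 𝒱)
    (hW : ∀ A ∈ 𝒲, ∀ B : Finset E, A ⊆ B → B ∈ 𝒲) :
    ((Finset.univ.filter (fun f : E → Fin 4 =>
        Est f 0 1 ∈ 𝒰 ∧ Est f 0 2 ∈ 𝒱 ∧ Est f 0 3 ∈ 𝒲)).card : ℚ)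
        / 4 ^ Fintype.card E
      ≥ (((Finset.univ.filter (fun f : E → Fin 4 => Est f 0 1 ∈ 𝒰)).card : ℚ)
            / 4 ^ Fintype.card E)
        * (((Finset.univ.filter (fun f : E → Fin 4 => Est f 0 2 ∈ 𝒱)).card : ℚ)
            / 4 ^ Fintype.card E)
        * (((Finset.univ.filter (fun f : E → Fin 4 => Est f 0 3 ∈ 𝒲)).card : ℚ)
            / 4 ^ Fintype.card E) := by
  have card_coloring : (4 : ℚ) ^ Fintype.card E = Fintype.card (E → Fin 4) := by simp
  simp only [card_coloring, card_filter_div_card]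
  simpa only [ite_zero_mul_ite_zero, mul_one, and_assoc] using
    colored_percolation_upward_pos_dep_general (K := ℚ)
      (monotone_ite_mem_of_isUpperSet fun A B hAB hA => hU A hA B hAB)
      (monotone_ite_mem_of_isUpperSet fun A B hAB hA => hV A hA B hAB)
      (monotone_ite_mem_of_isUpperSet fun A B hAB hA => hW A hA B hAB)
end

section
/- For each m ≥ 0 let E_m be a finite set with |E_m| = 2m+1, let f : E_m → {a,b,c,d} be a uniformly random coloring. Then the probability P(|E_{ab}(f)| > m and |E_{ac}(f)| > m and |E_{ad}(f)| > m) converges to 1/8 as m → ∞. -/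
open Finset

/-!
A color is a pair of signs `(x, y)`, where `a`, `b`, `c`, `d` are `(1, 1)`, `(1, -1)`, `(-1, 1)`,
`(-1, -1)`, so that membership in `E_ab`, `E_ac`, `E_ad` means `x = 1`, `y = 1`, `x * y = 1`. A
coloring becomes a pair `x`, `y` of independent uniform sign vectors, and the event says that the
majority function `M` takes the value `1` at `x`, `y` and `x * y`. Expanding the product of the
indicators `(1 + M) / 2`, and using that `M` has mean zero, shows that its probability is
`1 / 8 + 𝔼 (M x * M y * M (x * y)) / 8`.
As in the linearity test of Blum, Luby and Rubinfeld, the last expectation is the sum of the cubes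
of the Walsh coefficients of `M`, so by Parseval its absolute value is at most the largest absolute
value of a coefficient. The coefficient at `∅` is the mean of `M`; at a set containing `e` it is
bounded by the influence of `e`, the probability that flipping the sign at `e` changes the majority.
That requires an almost even split, which has probability of order `1 / √m`.
-/

section Walsh

variable {E : Type*}

/-- The Walsh function of `T`: the character `x ↦ ∏ e ∈ T, x e` of the group of sign vectors. -/
def walsh (T : Finset E) : (E → ℤˣ) →* ℤˣ := ∏ e ∈ T, Pi.evalMonoidHom (fun _ => ℤˣ) e

lemma walsh_apply (T : Finset E) (x : E → ℤˣ) : walsh T x = ∏ e ∈ T, x e := by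
  simp [walsh]

lemma walsh_mulSingle_neg_one [DecidableEq E] {T : Finset E} {e : E} (he : e ∈ T) :
    walsh T (Pi.mulSingle e (-1)) = -1 := by
  rw [walsh_apply, prod_eq_single_of_mem e he fun _ _ h => Pi.mulSingle_eq_of_ne h _,
    Pi.mulSingle_eq_same]

variable [Fintype E]

lemma sum_walsh_apply (x : E → ℤˣ) :
    ∑ T : Finset E, (walsh T x : ℤ) = if x = 1 then 2 ^ Fintype.card E else 0 := by
  have hprod : ∑ T : Finset E, (walsh T x : ℤ) = ∏ e, (1 + (x e : ℤ)) := by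
    simp [walsh_apply, prod_one_add]
  rw [hprod]
  split_ifs with hx
  · simp [hx, one_add_one_eq_two]
  · obtain ⟨e, he⟩ := Function.ne_iff.mp hx
    refine prod_eq_zero (mem_univ e) ?_
    simp [(Int.units_eq_one_or (x e)).resolve_left he]

lemma sum_walsh_mul_walsh (x y : E → ℤˣ) :
    ∑ T : Finset E, (walsh T x : ℤ) * walsh T y = if x = y then 2 ^ Fintype.card E else 0 := by
  have hinv : y⁻¹ = y := funext fun e => Int.units_inv_eq_self (y e)
  have heq : x * y = 1 ↔ x = y := by rw [mul_eq_one_iff_eq_inv, hinv]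
  simpa [heq] using sum_walsh_apply (x * y)

section CommRing

variable [DecidableEq E] {R : Type*} [CommRing R]

/-- The Walsh–Hadamard transform of a function on sign vectors, not normalized: it is
`2 ^ Fintype.card E` times the Fourier coefficient of `f` at `T`. -/
def walshTransform (f : (E → ℤˣ) → R) (T : Finset E) : R :=
  ∑ x, ((walsh T x : ℤ) : R) * f x

lemma walshTransform_empty (f : (E → ℤˣ) → R) : walshTransform f ∅ = ∑ x, f x := by
  simp [walshTransform, walsh]

lemma sum_walshTransform_mul (f g : (E → ℤˣ) → R) :
    ∑ T, walshTransform f T * walshTransform g T = 2 ^ Fintype.card E * ∑ x, f x * g x := by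
  have horth : ∀ x y : E → ℤˣ, ∑ T, ((walsh T x : ℤ) : R) * ((walsh T y : ℤ) : R) =
      if x = y then 2 ^ Fintype.card E else 0 := by
    intro x y
    exact_mod_cast congrArg (Int.cast (R := R)) (sum_walsh_mul_walsh x y)
  calc ∑ T, walshTransform f T * walshTransform g T
      = ∑ T, ∑ x, ∑ y, ((walsh T x : ℤ) : R) * ((walsh T y : ℤ) : R) * (f x * g y) := by
        simp only [walshTransform, sum_mul_sum, mul_mul_mul_comm]
    _ = ∑ x, ∑ y, (∑ T, ((walsh T x : ℤ) : R) * ((walsh T y : ℤ) : R)) * (f x * g y) := by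
        rw [sum_comm]
        simp only [sum_mul]
        exact sum_congr rfl fun x _ => sum_comm
    _ = 2 ^ Fintype.card E * ∑ x, f x * g x := by
        simp [horth, ite_mul, mul_sum]

lemma walshTransform_mul_walshTransform (f g : (E → ℤˣ) → R) (T : Finset E) :
    walshTransform f T * walshTransform g T =
      walshTransform (fun x => ∑ y, f y * g (x * y)) T := by
  have hinvol : ∀ x y : E → ℤˣ, x * y * y = x := fun x y =>
    funext fun e => by simp [mul_assoc]
  have htranslate : ∀ y, ((walsh T y : ℤ) : R) * walshTransform g T =
      ∑ x, ((walsh T x : ℤ) : R) * g (x * y) := by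
    intro y
    rw [walshTransform, mul_sum, ← Equiv.sum_comp (Equiv.mulRight y)]
    refine sum_congr rfl fun x _ => ?_
    rw [← mul_assoc, ← Int.cast_mul, ← Units.val_mul, ← map_mul, Equiv.coe_mulRight, mul_comm y,
      hinvol]
  calc walshTransform f T * walshTransform g T
      = ∑ y, f y * (((walsh T y : ℤ) : R) * walshTransform g T) := by
        rw [walshTransform, sum_mul]
        exact sum_congr rfl fun y _ => by ring
    _ = walshTransform (fun x => ∑ y, f y * g (x * y)) T := by
        simp only [htranslate]
        simp only [walshTransform, mul_sum]
        rw [sum_comm]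
        refine sum_congr rfl fun x _ => sum_congr rfl fun y _ => ?_
        ring

end CommRing

lemma abs_sum_mul_mul_le_of_abs_walshTransform_le [DecidableEq E] {R : Type*}
    [CommRing R] [LinearOrder R] [IsStrictOrderedRing R]
    {f : (E → ℤˣ) → R} {B : R} (hf : ∀ T, |walshTransform f T| ≤ B) (g : (E → ℤˣ) → R) :
    |∑ x, ∑ y, f x * g y * g (x * y)| ≤ B * ∑ x, g x ^ 2 := by
  have hpow : (0 : R) < 2 ^ Fintype.card E := by positivity
  refine le_of_mul_le_mul_left ?_ hpow
  calc 2 ^ Fintype.card E * |∑ x, ∑ y, f x * g y * g (x * y)|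
      = |∑ T, walshTransform f T * walshTransform g T ^ 2| := by
        simp only [sq, walshTransform_mul_walshTransform g g]
        rw [sum_walshTransform_mul, abs_mul, abs_of_pos hpow]
        simp only [mul_sum, mul_assoc]
    _ ≤ ∑ T, B * walshTransform g T ^ 2 := by
        refine (abs_sum_le_sum_abs _ _).trans (sum_le_sum fun T _ => ?_)
        rw [abs_mul, abs_sq]
        exact mul_le_mul_of_nonneg_right (hf T) (sq_nonneg _)
    _ = 2 ^ Fintype.card E * (B * ∑ x, g x ^ 2) := by
        simp only [← mul_sum, sq, sum_walshTransform_mul]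
        ring

end Walsh

section BooleanFunctions

lemma eight_mul_card_eq_one {G : Type*} [Group G] [Fintype G] {M : G → ℤˣ}
    (hM : ∑ x, (M x : ℤ) = 0) :
    (8 * #{p : G × G | M p.1 = 1 ∧ M p.2 = 1 ∧ M (p.1 * p.2) = 1} : ℤ) =
      (Fintype.card G : ℤ) ^ 2 + ∑ x, ∑ y, (M x : ℤ) * M y * M (x * y) := by
  have hind : ∀ x y, (8 * if M x = 1 ∧ M y = 1 ∧ M (x * y) = 1 then 1 else 0 : ℤ) =
      (1 + M x) * (1 + M y) * (1 + M (x * y)) := by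
    intro x y
    rcases Int.units_eq_one_or (M x) with hx | hx <;>
      rcases Int.units_eq_one_or (M y) with hy | hy <;>
        rcases Int.units_eq_one_or (M (x * y)) with hxy | hxy <;> simp [hx, hy, hxy]
  have hleft : ∀ x, ∑ y, (M (x * y) : ℤ) = 0 := fun x =>
    (Equiv.sum_comp (Equiv.mulLeft x) fun y => (M y : ℤ)).trans hM
  have hright : ∀ y, ∑ x, (M (x * y) : ℤ) = 0 := fun y =>
    (Equiv.sum_comp (Equiv.mulRight y) fun x => (M x : ℤ)).trans hM
  have hpair : ∑ x, ∑ y, (M y : ℤ) * M (x * y) = 0 := by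
    rw [sum_comm]
    simp [← mul_sum, hright]
  calc (8 * #{p : G × G | M p.1 = 1 ∧ M p.2 = 1 ∧ M (p.1 * p.2) = 1} : ℤ)
      = ∑ x, ∑ y, (1 + (M x : ℤ)) * (1 + M y) * (1 + M (x * y)) := by
        rw [natCast_card_filter, mul_sum, Fintype.sum_prod_type]
        simp only [hind]
    _ = ∑ x, ∑ y, ((1 + (M x : ℤ)) * (1 + M y + M (x * y)) + M y * M (x * y) +
          M x * M y * M (x * y)) :=
        sum_congr rfl fun x _ => sum_congr rfl fun y _ => by ring
    _ = (Fintype.card G : ℤ) ^ 2 + ∑ x, ∑ y, (M x : ℤ) * M y * M (x * y) := by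
        simp only [sum_add_distrib, ← mul_sum, hpair, hleft, hM]
        simp [← sum_mul, sum_add_distrib, hM, sq]

variable {E : Type*} [Fintype E] [DecidableEq E]

/-- The sign vectors at which flipping the sign at `e` changes the value of the Boolean function
`M`. Their proportion is the influence of `e` on `M`. -/
def pivotal (M : (E → ℤˣ) → ℤˣ) (e : E) : Finset (E → ℤˣ) :=
  {x | M (Pi.mulSingle e (-1) * x) ≠ M x}

lemma mem_pivotal {M : (E → ℤˣ) → ℤˣ} {e : E} {x : E → ℤˣ} :
    x ∈ pivotal M e ↔ M (Pi.mulSingle e (-1) * x) ≠ M x := by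
  simp [pivotal]

lemma abs_walshTransform_le_card_pivotal (M : (E → ℤˣ) → ℤˣ) {T : Finset E} {e : E} (he : e ∈ T) :
    |walshTransform (fun x => (M x : ℤ)) T| ≤ #(pivotal M e) := by
  have hflip : walshTransform (fun x => (M x : ℤ)) T =
      ∑ x, -((walsh T x : ℤ) * M (Pi.mulSingle e (-1) * x)) := by
    rw [walshTransform, ← Equiv.sum_comp (Equiv.mulLeft (Pi.mulSingle e (-1)))]
    simp [walsh_mulSingle_neg_one he]
  have hdouble : 2 * walshTransform (fun x => (M x : ℤ)) T =
      ∑ x, (walsh T x : ℤ) * (M x - M (Pi.mulSingle e (-1) * x)) := by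
    rw [two_mul]
    nth_rw 2 [hflip]
    rw [walshTransform, ← sum_add_distrib]
    exact sum_congr rfl fun x _ => by rw [Int.cast_id]; ring
  have hterm : ∀ x, |(walsh T x : ℤ) * (M x - M (Pi.mulSingle e (-1) * x))| =
      2 * if x ∈ pivotal M e then 1 else 0 := by
    intro x
    rw [abs_mul, Int.isUnit_iff_abs_eq.mp (walsh T x).isUnit, one_mul]
    rcases Int.units_eq_one_or (M x) with h | h <;>
      rcases Int.units_eq_one_or (M (Pi.mulSingle e (-1) * x)) with h' | h' <;>
        simp [mem_pivotal, h, h']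
  refine le_of_mul_le_mul_left ?_ (two_pos : (0 : ℤ) < 2)
  calc 2 * |walshTransform (fun x => (M x : ℤ)) T|
      = |∑ x, (walsh T x : ℤ) * (M x - M (Pi.mulSingle e (-1) * x))| := by
        rw [← hdouble, abs_mul, abs_two]
    _ ≤ ∑ x, |(walsh T x : ℤ) * (M x - M (Pi.mulSingle e (-1) * x))| :=
        abs_sum_le_sum_abs _ _
    _ = 2 * #(pivotal M e) := by
        simp only [hterm, ← mul_sum, sum_boole, filter_univ_mem]

theorem abs_eight_mul_card_sub_le_of_card_pivotal_le {M : (E → ℤˣ) → ℤˣ}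
    (hM : ∑ x, (M x : ℤ) = 0) {B : ℕ} (hB : ∀ e, #(pivotal M e) ≤ B) :
    |(8 * #{p : (E → ℤˣ) × (E → ℤˣ) | M p.1 = 1 ∧ M p.2 = 1 ∧ M (p.1 * p.2) = 1} : ℤ) -
      4 ^ Fintype.card E| ≤ B * 2 ^ Fintype.card E := by
  have hcoeff : ∀ T, |walshTransform (fun x => (M x : ℤ)) T| ≤ B := by
    intro T
    obtain rfl | ⟨e, he⟩ := T.eq_empty_or_nonempty
    · simp [walshTransform_empty, hM]
    · exact (abs_walshTransform_le_card_pivotal M he).trans (by exact_mod_cast hB e)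
  have hsq : ∑ x, (M x : ℤ) ^ 2 = 2 ^ Fintype.card E := by
    simp [← Units.val_pow_eq_pow_val]
  have hcard_sq : (Fintype.card (E → ℤˣ) : ℤ) ^ 2 = 4 ^ Fintype.card E := by
    rw [Fintype.card_fun, Fintype.card_units_int, Nat.cast_pow, ← pow_mul, mul_comm, pow_mul]
    norm_num
  rw [eight_mul_card_eq_one hM, hcard_sq, add_sub_cancel_left, ← hsq]
  exact abs_sum_mul_mul_le_of_abs_walshTransform_le hcoeff _

end BooleanFunctions

section Majority

variable {E : Type*} [Fintype E]

/-- The set of positive entries of a sign vector. -/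
def ones (x : E → ℤˣ) : Finset E := {e | x e = 1}

lemma mem_ones {x : E → ℤˣ} {e : E} : e ∈ ones x ↔ x e = 1 := by
  simp [ones]

lemma ones_injective : Function.Injective (ones : (E → ℤˣ) → Finset E) := by
  intro x y h
  funext e
  have he : x e = 1 ↔ y e = 1 := by rw [← mem_ones, ← mem_ones, h]
  rcases Int.units_eq_one_or (x e) with hx | hx <;>
    rcases Int.units_eq_one_or (y e) with hy | hy <;> simp_all

/-- The majority vote of a sign vector. Ties, which occur only when `Fintype.card E` is even,
count as `-1`. -/
def majority (x : E → ℤˣ) : ℤˣ := if Fintype.card E < 2 * #(ones x) then 1 else -1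

lemma majority_eq_one_iff {x : E → ℤˣ} : majority x = 1 ↔ Fintype.card E < 2 * #(ones x) := by
  simp [majority]

lemma ones_neg [DecidableEq E] (x : E → ℤˣ) : ones (-x) = (ones x)ᶜ := by
  ext e
  simp [mem_ones, ← Int.units_ne_iff_eq_neg, neg_eq_iff_eq_neg]

lemma majority_neg (hE : Odd (Fintype.card E)) (x : E → ℤˣ) : majority (-x) = -majority x := by
  classical
  obtain ⟨k, hk⟩ := hE
  have hle := card_le_univ (ones x)
  simp only [majority, ones_neg, card_compl]
  split_ifs <;> first | omega | simp

variable [DecidableEq E]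

lemma sum_majority (hE : Odd (Fintype.card E)) : ∑ x : E → ℤˣ, (majority x : ℤ) = 0 := by
  have h := Equiv.sum_comp (Equiv.neg (E → ℤˣ)) fun x => (majority x : ℤ)
  simp only [Equiv.neg_apply, majority_neg hE, Units.val_neg, sum_neg_distrib] at h
  omega

lemma card_card_ones_eq_le (k : ℕ) : #{x : E → ℤˣ | #(ones x) = k} ≤ (Fintype.card E).choose k := by
  rw [← card_univ, ← card_powersetCard]
  exact card_le_card_of_injOn ones (by simp [Set.MapsTo]) ones_injective.injOn

lemma card_ones_mulSingle_mul_le (e : E) (x : E → ℤˣ) :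
    #(ones (Pi.mulSingle e (-1) * x)) ≤ #(ones x) + 1 := by
  refine (card_le_card fun e' he' => ?_).trans (card_insert_le e (ones x))
  by_cases h : e' = e
  · simp [h]
  · simpa [mem_ones, h] using he'

lemma card_ones_le_card_ones_mulSingle_mul (e : E) (x : E → ℤˣ) :
    #(ones x) ≤ #(ones (Pi.mulSingle e (-1) * x)) + 1 := by
  have h := card_ones_mulSingle_mul_le e (Pi.mulSingle e (-1) * x)
  rwa [← mul_assoc, ← Pi.mulSingle_mul, neg_one_mul, neg_neg, Pi.mulSingle_one, one_mul] at h

lemma card_pivotal_majority_le (e : E) :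
    #(pivotal majority e) ≤ (Fintype.card E + 1).choose (Fintype.card E / 2 + 1) := by
  have hsplit : pivotal majority e ⊆
      ({x : E → ℤˣ | #(ones x) = Fintype.card E / 2} : Finset _) ∪
        ({x : E → ℤˣ | #(ones x) = Fintype.card E / 2 + 1} : Finset _) := by
    intro x hx
    have hup := card_ones_mulSingle_mul_le e x
    have hdown := card_ones_le_card_ones_mulSingle_mul e x
    rw [mem_pivotal] at hx
    unfold majority at hx
    simp only [mem_union, mem_filter, mem_univ, true_and]
    split_ifs at hx <;> first | omega | simp at hx
  calc #(pivotal majority e)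
      ≤ _ := (card_le_card hsplit).trans (card_union_le _ _)
    _ ≤ (Fintype.card E).choose (Fintype.card E / 2) +
          (Fintype.card E).choose (Fintype.card E / 2 + 1) :=
        add_le_add (card_card_ones_eq_le _) (card_card_ones_eq_le _)
    _ = _ := (Nat.choose_succ_succ' _ _).symm

end Majority

section CentralBinomial

lemma two_mul_add_one_mul_centralBinom_sq_le (n : ℕ) :
    (2 * n + 1) * n.centralBinom ^ 2 ≤ 16 ^ n := by
  induction n with
  | zero => simp
  | succ n ih =>
    refine Nat.le_of_mul_le_mul_left ?_ (show 0 < (n + 1) ^ 2 by positivity)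
    calc (n + 1) ^ 2 * ((2 * (n + 1) + 1) * (n + 1).centralBinom ^ 2)
        = (2 * n + 3) * ((n + 1) * (n + 1).centralBinom) ^ 2 := by ring
      _ = (4 * ((2 * n + 3) * (2 * n + 1))) * ((2 * n + 1) * n.centralBinom ^ 2) := by
          rw [Nat.succ_mul_centralBinom_succ]
          ring
      _ ≤ (16 * (n + 1) ^ 2) * 16 ^ n := Nat.mul_le_mul (by nlinarith) ih
      _ = (n + 1) ^ 2 * 16 ^ (n + 1) := by ring

lemma tendsto_centralBinom_div_four_pow :
    Filter.Tendsto (fun n : ℕ => (n.centralBinom : ℝ) / 4 ^ n) Filter.atTop (nhds 0) := by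
  have hle : ∀ n : ℕ, (n.centralBinom : ℝ) / 4 ^ n ≤ √(1 / ((n : ℝ) + 1)) := by
    intro n
    have h : (2 * (n : ℝ) + 1) * n.centralBinom ^ 2 ≤ 16 ^ n := by
      exact_mod_cast two_mul_add_one_mul_centralBinom_sq_le n
    have hpow : ((4 : ℝ) ^ n) ^ 2 = 16 ^ n := by
      rw [pow_right_comm]
      norm_num
    apply Real.le_sqrt_of_sq_le
    rw [div_pow, hpow, div_le_div_iff₀ (by positivity) (by positivity)]
    nlinarith [mul_nonneg n.cast_nonneg (sq_nonneg (n.centralBinom : ℝ))]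
  refine squeeze_zero (fun n => by positivity) hle ?_
  simpa using tendsto_one_div_add_atTop_nhds_zero_nat.sqrt

end CentralBinomial

section Colorings

/-- The identification of the four colors with pairs of signs under which the third nontrivial
character is the product of the first two. -/
noncomputable def colorEquivSigns : Fin 4 ≃ ℤˣ × ℤˣ :=
  Equiv.ofBijective ![(1, 1), (1, -1), (-1, 1), (-1, -1)] (by decide)

variable {E : Type*} [Fintype E] [DecidableEq E] {m : ℕ}

lemma card_majority_colorings (hE : Fintype.card E = 2 * m + 1) :
    #{f : E → Fin 4 | m < #(Est f 0 1) ∧ m < #(Est f 0 2) ∧ m < #(Est f 0 3)} =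
      #{p : (E → ℤˣ) × (E → ℤˣ) |
        majority p.1 = 1 ∧ majority p.2 = 1 ∧ majority (p.1 * p.2) = 1} := by
  have hmaj : ∀ x : E → ℤˣ, majority x = 1 ↔ m < #{e | x e = 1} := by
    intro x
    rw [majority_eq_one_iff, hE, ones]
    omega
  have hab : ∀ s : Fin 4, (s = 0 ∨ s = 1) ↔ (colorEquivSigns s).1 = 1 := by
    simp only [colorEquivSigns, Equiv.ofBijective_apply]; decide
  have hac : ∀ s : Fin 4, (s = 0 ∨ s = 2) ↔ (colorEquivSigns s).2 = 1 := by
    simp only [colorEquivSigns, Equiv.ofBijective_apply]; decide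
  have had : ∀ s : Fin 4, (s = 0 ∨ s = 3) ↔
      (colorEquivSigns s).1 * (colorEquivSigns s).2 = 1 := by
    simp only [colorEquivSigns, Equiv.ofBijective_apply]; decide
  refine card_equiv
    (((Equiv.refl E).arrowCongr colorEquivSigns).trans
      (Equiv.arrowProdEquivProdArrow E (fun _ => ℤˣ) (fun _ => ℤˣ))) fun f => ?_
  simp only [mem_filter, mem_univ, true_and, hmaj, Est, hab, hac, had]
  rfl

lemma abs_majority_colorings_div_sub_le (hE : Fintype.card E = 2 * m + 1) :
    |(#{f : E → Fin 4 | m < #(Est f 0 1) ∧ m < #(Est f 0 2) ∧ m < #(Est f 0 3)} : ℝ) /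
      4 ^ (2 * m + 1) - 1 / 8| ≤ (m + 1).centralBinom / 4 ^ (m + 1) := by
  have hpiv : ∀ e : E, #(pivotal majority e) ≤ (m + 1).centralBinom := by
    intro e
    have h := card_pivotal_majority_le e
    rwa [hE, show (2 * m + 1) / 2 = m by omega] at h
  have h := abs_eight_mul_card_sub_le_of_card_pivotal_le (sum_majority ⟨m, hE⟩) hpiv
  rw [← card_majority_colorings hE, hE] at h
  set N := #{f : E → Fin 4 | m < #(Est f 0 1) ∧ m < #(Est f 0 2) ∧ m < #(Est f 0 3)}
  have hN : |(8 * N : ℝ) - 4 ^ (2 * m + 1)| ≤ (m + 1).centralBinom * 2 ^ (2 * m + 1) := by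
    exact_mod_cast h
  have htwo : (2 : ℝ) ^ (2 * m + 1) = 2 * 4 ^ m := by
    rw [pow_succ', pow_mul]
    norm_num
  calc |(N : ℝ) / 4 ^ (2 * m + 1) - 1 / 8|
      = |((8 * N : ℝ) - 4 ^ (2 * m + 1)) / (8 * 4 ^ (2 * m + 1))| := by
        congr 1
        field_simp
    _ = |(8 * N : ℝ) - 4 ^ (2 * m + 1)| / (8 * 4 ^ (2 * m + 1)) := by
        rw [abs_div, abs_of_pos (show (0 : ℝ) < 8 * 4 ^ (2 * m + 1) by positivity)]
    _ ≤ (m + 1).centralBinom * 2 ^ (2 * m + 1) / (8 * 4 ^ (2 * m + 1)) := by gcongr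
    _ = (m + 1).centralBinom / 4 ^ (m + 1) / 4 := by
        rw [htwo]
        field_simp
        ring
    _ ≤ (m + 1).centralBinom / 4 ^ (m + 1) := div_le_self (by positivity) (by norm_num)

end Colorings

/-- For uniform random 4-colorings of finite sets `E_m` with `|E_m| = 2m+1`, the
probability that each of `E_{ab}(f)`, `E_{ac}(f)`, `E_{ad}(f)` has more than `m` elements
(the majority property) tends to `1/8` as `m → ∞`. -/
theorem majority_limit_abcd (E : ℕ → Type*) [∀ m, Fintype (E m)] [∀ m, DecidableEq (E m)]
    (hcard : ∀ m, Fintype.card (E m) = 2 * m + 1) :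
    Filter.Tendsto
      (fun m =>
        ((Finset.univ.filter (fun f : E m → Fin 4 =>
            m < (Est f 0 1).card ∧ m < (Est f 0 2).card ∧ m < (Est f 0 3).card)).card : ℝ)
          / 4 ^ (2 * m + 1))
      Filter.atTop (nhds (1 / 8)) := by
  rw [tendsto_iff_dist_tendsto_zero]
  refine squeeze_zero (fun _ => dist_nonneg) (fun m => ?_)
    (tendsto_centralBinom_div_four_pow.comp (Filter.tendsto_add_atTop_nat 1))
  exact abs_majority_colorings_div_sub_le (hcard m)
end
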